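/- Let S be a nonempty bounded subset of ℝ³ and for ε > 0 set Θ_ε = {x ∈ ℝ³ : dist(x,S) < ε}. Let R > 1 be such that Θ₁ is contained in the ball of radius R centered at the origin. Then for every δ ∈ (0,1] and every α < 0 satisfying 3(1-α)² ≤ 2(-α)³, one has ∫_{ℝ³∖Θ_δ} e^{α·dist(x,S)} dx ≤ (32π/3) R³ (e^{αR} + e^{αδ}). -/

import Mathlib

open MeasureTheory Metric Real

/-!
If `S` is contained in the ball of radius `R` about the origin, then `dist(x, S) ≥ ‖x‖ - R`.
Split the integral at `‖x‖ = 2R`. Inside, `dist(x, S) ≥ δ` bounds the integral by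
`e^{αδ} · vol B(2R) = (32π/3) R³ e^{αδ}`. Outside, polar coordinates bound it by
`4π ∫_{2R}^∞ r² e^{α(r - R)} dr`, which with `a = -α` equals
`4π e^{αR} ((2R)²/a + 2(2R)/a² + 2/a³)`; as `R ≥ 1`, the condition
on `α` makes the bracket at most `(8/3) R³`.
-/

open Filter Module Polynomial Set Topology

section PolynomialMulExpNeg

variable (p : ℝ[X]) (c : ℝ)

lemma integrableOn_Ioi_eval_mul_exp_neg :
    IntegrableOn (fun x ↦ p.eval x * exp (-x)) (Ioi c) := by
  refine integrable_of_isBigO_exp_neg one_half_pos (by fun_prop) ?_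
  have eval_isBigO : (fun x ↦ p.eval x) =O[atTop] fun x ↦ exp (1 / 2 * x) :=
    (p.isBigO_atTop_of_degree_le (X ^ p.natDegree) (by simp [degree_le_natDegree])).trans <| by
      simpa using (isLittleO_pow_exp_pos_mul_atTop p.natDegree one_half_pos).isBigO
  refine (eval_isBigO.mul (Asymptotics.isBigO_refl (fun x ↦ exp (-x)) atTop)).congr_right
    fun x ↦ ?_
  rw [← exp_add]
  ring_nf

lemma hasDerivAt_neg_eval_sumIDeriv_mul_exp_neg (x : ℝ) :
    HasDerivAt (fun x ↦ -((sumIDeriv p).eval x * exp (-x))) (p.eval x * exp (-x)) x := by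
  refine (((sumIDeriv p).hasDerivAt x).mul (hasDerivAt_neg x).exp).neg.congr_deriv ?_
  nth_rw 2 [sumIDeriv_eq_self_add p]
  rw [eval_add]
  ring

lemma integral_Ioi_eval_mul_exp_neg :
    ∫ x in Ioi c, p.eval x * exp (-x) = (sumIDeriv p).eval c * exp (-c) := by
  have tendsto_zero : Tendsto (fun x ↦ -((sumIDeriv p).eval x * exp (-x))) atTop (𝓝 0) := by
    simpa [exp_neg, div_eq_mul_inv] using (sumIDeriv p).tendsto_div_exp_atTop.neg
  simpa using integral_Ioi_of_hasDerivAt_of_tendsto'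
    (fun x _ ↦ hasDerivAt_neg_eval_sumIDeriv_mul_exp_neg p x)
    (integrableOn_Ioi_eval_mul_exp_neg p c) tendsto_zero

end PolynomialMulExpNeg

lemma integrableOn_Ioi_pow_mul_exp_neg_mul {a : ℝ} (ha : 0 < a) (n : ℕ) (c : ℝ) :
    IntegrableOn (fun x ↦ x ^ n * exp (-(a * x))) (Ioi c) := by
  have := (integrableOn_Ioi_comp_mul_left_iff _ c ha).2
    (integrableOn_Ioi_eval_mul_exp_neg (X ^ n) (a * c))
  simpa [mul_pow, mul_assoc, ha.ne', IntegrableOn] using this.const_mul (a ^ n)⁻¹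

lemma integral_Ioi_pow_mul_exp_neg_mul {a : ℝ} (ha : 0 < a) (n : ℕ) (c : ℝ) :
    ∫ x in Ioi c, x ^ n * exp (-(a * x)) =
      (a ^ (n + 1))⁻¹ * (sumIDeriv (X ^ n)).eval (a * c) * exp (-(a * c)) := by
  have scaled := integral_comp_mul_left_Ioi (fun x ↦ (X ^ n : ℝ[X]).eval x * exp (-x)) c ha
  rw [integral_Ioi_eval_mul_exp_neg] at scaled
  simp only [eval_pow, eval_X, mul_pow, mul_assoc, smul_eq_mul, integral_const_mul] at scaled
  rw [pow_succ, mul_inv, mul_assoc, mul_assoc, ← scaled, inv_mul_cancel_left₀ (by positivity)]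

section Radial

variable {E F : Type*} [NormedAddCommGroup E] [NormedSpace ℝ E] [Nontrivial E]
  [FiniteDimensional ℝ E] [MeasurableSpace E] [BorelSpace E] (μ : Measure E) [μ.IsAddHaarMeasure]
  [NormedAddCommGroup F] [NormedSpace ℝ F] {a ρ : ℝ}

lemma setIntegral_compl_closedBall_fun_norm (hρ : 0 ≤ ρ) (f : ℝ → F) :
    ∫ x in (closedBall 0 ρ)ᶜ, f ‖x‖ ∂μ =
      finrank ℝ E • μ.real (ball 0 1) • ∫ r in Ioi ρ, r ^ (finrank ℝ E - 1) • f r := by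
  have indicator_norm (x : E) :
      (closedBall 0 ρ)ᶜ.indicator (fun x ↦ f ‖x‖) x = (Ioi ρ).indicator f ‖x‖ := by
    simp [indicator]
  rw [← integral_indicator measurableSet_closedBall.compl, funext indicator_norm,
    integral_fun_norm_addHaar]
  simp only [← indicator_smul]
  rw [setIntegral_indicator measurableSet_Ioi,
    inter_eq_right.2 (Ioi_subset_Ioi hρ)]

lemma integrable_exp_neg_mul_norm (ha : 0 < a) : Integrable (fun x : E ↦ exp (-(a * ‖x‖))) μ :=
  (integrable_fun_norm_addHaar μ (f := fun r ↦ exp (-(a * r)))).2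
    (integrableOn_Ioi_pow_mul_exp_neg_mul ha _ 0)

lemma setIntegral_compl_closedBall_exp_neg_mul_norm (ha : 0 < a) (hρ : 0 ≤ ρ) :
    ∫ x in (closedBall 0 ρ)ᶜ, exp (-(a * ‖x‖)) ∂μ =
      finrank ℝ E * μ.real (ball 0 1) * (a ^ finrank ℝ E)⁻¹ *
        (sumIDeriv (X ^ (finrank ℝ E - 1))).eval (a * ρ) * exp (-(a * ρ)) := by
  rw [setIntegral_compl_closedBall_fun_norm μ hρ fun r ↦ exp (-(a * r))]
  simp only [smul_eq_mul, nsmul_eq_mul, integral_Ioi_pow_mul_exp_neg_mul ha,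
    Nat.sub_add_cancel (finrank_pos (R := ℝ) (M := E))]
  ring

end Radial

section SeminormedGroup

variable {E : Type*} [SeminormedAddCommGroup E] {S : Set E} {R : ℝ}

lemma norm_sub_le_infDist (hS : S.Nonempty) (hSR : S ⊆ closedBall 0 R) (x : E) :
    ‖x‖ - R ≤ infDist x S := by
  refine (le_infDist hS).2 fun y hy ↦ ?_
  have norm_y_le : ‖y‖ ≤ R := mem_closedBall_zero_iff.1 (hSR hy)
  have := norm_sub_norm_le x y
  rw [dist_eq_norm]
  linarith

lemma exp_neg_mul_infDist_le (hS : S.Nonempty) (hSR : S ⊆ closedBall 0 R) {a : ℝ} (ha : 0 ≤ a)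
    (x : E) :
    exp (-(a * infDist x S)) ≤ exp (a * R) * exp (-(a * ‖x‖)) := by
  rw [← exp_add, exp_le_exp]
  linarith [mul_le_mul_of_nonneg_left (norm_sub_le_infDist hS hSR x) ha]

end SeminormedGroup

section ExpNegMulInfDist

variable {E : Type*} [NormedAddCommGroup E] [NormedSpace ℝ E] [Nontrivial E]
  [FiniteDimensional ℝ E] [MeasurableSpace E] [BorelSpace E] (μ : Measure E) [μ.IsAddHaarMeasure]
  {S : Set E} {R a : ℝ}

lemma integrable_exp_neg_mul_infDist (hS : S.Nonempty) (hSR : S ⊆ closedBall 0 R) (ha : 0 < a) :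
    Integrable (fun x ↦ exp (-(a * infDist x S))) μ :=
  ((integrable_exp_neg_mul_norm μ ha).const_mul (exp (a * R))).mono' (by fun_prop)
    (ae_of_all _ fun x ↦ by simpa using exp_neg_mul_infDist_le hS hSR ha.le x)

lemma setIntegral_exp_neg_mul_infDist_le (hS : S.Nonempty) (hSR : S ⊆ closedBall 0 R) (ha : 0 < a)
    (δ ρ : ℝ) :
    ∫ x in {x | δ ≤ infDist x S}, exp (-(a * infDist x S)) ∂μ ≤
      exp (-(a * δ)) * μ.real (closedBall 0 ρ) +
        exp (a * R) * ∫ x in (closedBall 0 ρ)ᶜ, exp (-(a * ‖x‖)) ∂μ := by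
  set A := {x | δ ≤ infDist x S}
  set B : Set E := closedBall 0 ρ
  have hA : MeasurableSet A := measurableSet_le measurable_const (by fun_prop)
  have hint := integrable_exp_neg_mul_infDist μ hS hSR ha
  have hint_norm := (integrable_exp_neg_mul_norm μ ha).const_mul (exp (a * R))
  have near : ∫ x in A ∩ B, exp (-(a * infDist x S)) ∂μ ≤ exp (-(a * δ)) * μ.real B := calc
    _ ≤ ∫ _ in A ∩ B, exp (-(a * δ)) ∂μ := by
      refine setIntegral_mono_on hint.integrableOn (integrableOn_const ?_)
        (hA.inter measurableSet_closedBall) fun x hx ↦ ?_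
      · exact measure_ne_top_of_subset inter_subset_right measure_closedBall_lt_top.ne
      · gcongr
        exact hx.1
    _ ≤ _ := by
      rw [setIntegral_const, smul_eq_mul, mul_comm]
      gcongr
      · exact measure_closedBall_lt_top.ne
      · exact inter_subset_right
  have far : ∫ x in A \ B, exp (-(a * infDist x S)) ∂μ ≤
      exp (a * R) * ∫ x in Bᶜ, exp (-(a * ‖x‖)) ∂μ := calc
    _ ≤ ∫ x in Bᶜ, exp (-(a * infDist x S)) ∂μ :=
      setIntegral_mono_set hint.integrableOn (ae_of_all _ fun _ ↦ (exp_pos _).le)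
        (ae_of_all _ (sdiff_subset_compl A B))
    _ ≤ ∫ x in Bᶜ, exp (a * R) * exp (-(a * ‖x‖)) ∂μ :=
      setIntegral_mono hint.integrableOn hint_norm.integrableOn
        (exp_neg_mul_infDist_le hS hSR ha.le)
    _ = _ := integral_const_mul ..
  rw [← integral_inter_add_sdiff measurableSet_closedBall hint.integrableOn]
  exact add_le_add near far

end ExpNegMulInfDist

lemma eval_sumIDeriv_X_sq (x : ℝ) : (sumIDeriv (X ^ 2)).eval x = x ^ 2 + 2 * x + 2 := by
  rw [sumIDeriv_apply_of_le (n := 2) (by simp)]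
  norm_num [Finset.sum_range_succ]

lemma volume_real_unitBall_fin_three :
    volume.real (ball (0 : EuclideanSpace ℝ (Fin 3)) 1) = 4 * π / 3 := by
  rw [Measure.real, EuclideanSpace.volume_ball_fin_three]
  simp [mul_comm, show 0 ≤ π * 4 / 3 by positivity]

lemma setIntegral_compl_closedBall_exp_neg_mul_norm_fin_three {a ρ : ℝ} (ha : 0 < a)
    (hρ : 0 ≤ ρ) :
    ∫ x in (closedBall (0 : EuclideanSpace ℝ (Fin 3)) ρ)ᶜ, exp (-(a * ‖x‖)) =
      4 * π * ((a ^ 3)⁻¹ * ((a * ρ) ^ 2 + 2 * (a * ρ) + 2)) * exp (-(a * ρ)) := by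
  rw [setIntegral_compl_closedBall_exp_neg_mul_norm _ ha hρ, volume_real_unitBall_fin_three]
  simp only [finrank_euclideanSpace_fin, Nat.add_one_sub_one, eval_sumIDeriv_X_sq]
  ring

lemma inv_pow_three_mul_quadratic_le {R a : ℝ} (hR : 1 ≤ R) (ha : 0 < a)
    (ha_large : 3 * (a ^ 2 + (1 + a) ^ 2) ≤ 4 * a ^ 3) :
    (a ^ 3)⁻¹ * ((a * (2 * R)) ^ 2 + 2 * (a * (2 * R)) + 2) ≤ 8 / 3 * R ^ 3 := by
  rw [inv_mul_le_iff₀ (by positivity)]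
  have le_cube : R ≤ R ^ 3 := le_self_pow₀ hR (by norm_num)
  have sq_le_cube : R ^ 2 ≤ R ^ 3 := pow_le_pow_right₀ hR (by norm_num)
  have one_le_cube : 1 ≤ R ^ 3 := one_le_pow₀ hR
  calc (a * (2 * R)) ^ 2 + 2 * (a * (2 * R)) + 2
      = 4 * a ^ 2 * R ^ 2 + 4 * a * R + 2 * 1 := by ring
    _ ≤ 4 * a ^ 2 * R ^ 3 + 4 * a * R ^ 3 + 2 * R ^ 3 := by gcongr
    _ = 2 / 3 * (3 * (a ^ 2 + (1 + a) ^ 2)) * R ^ 3 := by ring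
    _ ≤ 2 / 3 * (4 * a ^ 3) * R ^ 3 := by gcongr
    _ = a ^ 3 * (8 / 3 * R ^ 3) := by ring

/-- With `a = -α` the condition `hα` says `4/a + 4/a² + 2/a³ ≤ 8/3`; it follows from
`3(1-α)² ≤ 2(-α)³` because `α² ≤ (1-α)²` for `α ≤ 0`. -/
theorem stmt_4_general {S : Set (EuclideanSpace ℝ (Fin 3))} (hS : S.Nonempty) {R : ℝ}
    (hR : 1 ≤ R) (hSR : S ⊆ closedBall 0 R) (δ : ℝ) {α : ℝ}
    (hα : 3 * (α ^ 2 + (1 - α) ^ 2) ≤ 4 * (-α) ^ 3) :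
    ∫ x in {x | δ ≤ infDist x S}, exp (α * infDist x S) ≤
      (32 * π / 3) * R ^ 3 * (exp (α * R) + exp (α * δ)) := by
  obtain ⟨a, rfl⟩ : ∃ a, α = -a := ⟨-α, by ring⟩
  simp only [even_two, Even.neg_pow, sub_neg_eq_add, neg_neg, neg_mul] at hα ⊢
  have ha : 0 < a := by
    have : 0 < a ^ 3 := by nlinarith
    exact (Odd.pow_pos_iff (by decide)).1 this
  have hρ : 0 ≤ 2 * R := by linarith
  calc ∫ x in {x | δ ≤ infDist x S}, exp (-(a * infDist x S))
      ≤ exp (-(a * δ)) * volume.real (closedBall (0 : EuclideanSpace ℝ (Fin 3)) (2 * R)) +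
          exp (a * R) *
            ∫ x in (closedBall (0 : EuclideanSpace ℝ (Fin 3)) (2 * R))ᶜ, exp (-(a * ‖x‖)) :=
        setIntegral_exp_neg_mul_infDist_le volume hS hSR ha δ (2 * R)
    _ = 32 * π / 3 * R ^ 3 * exp (-(a * δ)) +
          4 * π * ((a ^ 3)⁻¹ * ((a * (2 * R)) ^ 2 + 2 * (a * (2 * R)) + 2)) *
            (exp (a * R) * exp (-(a * (2 * R)))) := by
        rw [Measure.addHaar_real_closedBall _ _ hρ,
          setIntegral_compl_closedBall_exp_neg_mul_norm_fin_three ha hρ,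
          volume_real_unitBall_fin_three, finrank_euclideanSpace_fin]
        ring
    _ ≤ 32 * π / 3 * R ^ 3 * exp (-(a * δ)) +
          4 * π * (8 / 3 * R ^ 3) * (exp (a * R) * exp (-(a * (2 * R)))) := by
        gcongr _ + 4 * π * ?_ * _
        exact inv_pow_three_mul_quadratic_le hR ha hα
    _ = 32 * π / 3 * R ^ 3 * (exp (-(a * R)) + exp (-(a * δ))) := by
        rw [← exp_add, show a * R + -(a * (2 * R)) = -(a * R) by ring]
        ring

/-- For a nonempty bounded `S ⊂ ℝ³` with `ε`-neighborhoods
`Θ_ε = {x : dist(x,S) < ε}`, if `Θ₁` is contained in the ball of radius `R > 1`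
about the origin, then for `δ ∈ (0,1]` and `α < 0` with `3(1-α)² ≤ 2(-α)³`:
`∫_{ℝ³∖Θ_δ} e^{α·dist(x,S)} dx ≤ (32π/3) R³ (e^{αR} + e^{αδ})`. -/
theorem stmt_4
    (S : Set (EuclideanSpace ℝ (Fin 3)))
    (hS : S.Nonempty) (hSbdd : Bornology.IsBounded S)
    (Θ : ℝ → Set (EuclideanSpace ℝ (Fin 3)))
    (hΘ : ∀ ε, Θ ε = {x | infDist x S < ε})
    (R : ℝ) (hR : 1 < R) (hΘR : Θ 1 ⊆ Metric.ball (0 : EuclideanSpace ℝ (Fin 3)) R)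
    (δ : ℝ) (hδ : δ ∈ Set.Ioc (0 : ℝ) 1) (α : ℝ) (hα : α < 0)
    (hα' : 3 * (1 - α) ^ 2 ≤ 2 * (-α) ^ 3) :
    ∫ x in (Θ δ)ᶜ, Real.exp (α * infDist x S) ≤
      (32 * π / 3) * R ^ 3 * (Real.exp (α * R) + Real.exp (α * δ)) := by
  have hSR : S ⊆ closedBall 0 R := fun x hx ↦
    ball_subset_closedBall (hΘR (by simp [hΘ, infDist_zero_of_mem hx]))
  simpa only [hΘ, compl_ofPred, not_lt] using
    stmt_4_general hS hR.le hSR δ (by nlinarith)
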